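/- arXiv:math/9701214 — 5 statements merged into one kernel-verified Lean document; each statement's English description precedes it below -/
import Mathlib

section
/- Let r > 0 and l > 0 be real numbers, and define μ_{k,m} = (k² − 1)/r² + m²π²/l² for integers k ≥ 0, m ≥ 1. There exists an admissible mode (k, m) (i.e. k ≥ 0, m ≥ 1, (k, m) ≠ (0, 1)) with μ_{k,m} ≤ 0 if and only if l ≥ 2πr. (This is the Plateau–Rayleigh criterion: a cylindrical column of radius r becomes unstable exactly when its length reaches π times its diameter.) -/
/-!
Non-axisymmetric modes `k ≥ 1` always have positive eigenvalue, and an axisymmetric mode `(0, m)`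
is destabilising exactly when `m` half-waves of length `π r` fit along the cylinder. Volume
preservation rules out `m = 1`, so the first instability is `m = 2`, whence the factor `2`.
-/

/-- The eigenvalue `μ_{k,m}` of the second variation operator of a cylindrical film of radius `r`
and length `l`, where `k` is the angular and `m` the axial wave number. It has its intended meaning
only for `0 < r`, `0 < l` and `1 ≤ m`. -/
noncomputable def cylinderEigenvalue (r l : ℝ) (k m : ℕ) : ℝ :=
  ((k : ℝ) ^ 2 - 1) / r ^ 2 + (m : ℝ) ^ 2 * Real.pi ^ 2 / l ^ 2

theorem cylinderEigenvalue_pos (r : ℝ) {l : ℝ} {k m : ℕ} (hl : l ≠ 0) (hk : 1 ≤ k) (hm : 1 ≤ m) :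
    0 < cylinderEigenvalue r l k m := by
  have angular_nonneg : 0 ≤ ((k : ℝ) ^ 2 - 1) / r ^ 2 :=
    div_nonneg (sub_nonneg.mpr (one_le_pow₀ (Nat.one_le_cast.mpr hk))) (sq_nonneg r)
  have axial_pos : 0 < (m : ℝ) ^ 2 * Real.pi ^ 2 / l ^ 2 := by positivity
  exact add_pos_of_nonneg_of_pos angular_nonneg axial_pos

theorem cylinderEigenvalue_zero_left_nonpos_iff {r l : ℝ} (hr : 0 < r) (hl : 0 < l) (m : ℕ) :
    cylinderEigenvalue r l 0 m ≤ 0 ↔ m * Real.pi * r ≤ l := by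
  have eigenvalue_eq : cylinderEigenvalue r l 0 m = (m * Real.pi / l) ^ 2 - (1 / r) ^ 2 := by
    simp only [cylinderEigenvalue, Nat.cast_zero]
    ring
  calc cylinderEigenvalue r l 0 m ≤ 0
      ↔ (m * Real.pi / l) ^ 2 ≤ (1 / r) ^ 2 := by rw [eigenvalue_eq, sub_nonpos]
    _ ↔ m * Real.pi / l ≤ 1 / r := sq_le_sq₀ (by positivity) (by positivity)
    _ ↔ m * Real.pi * r ≤ l := by rw [div_le_div_iff₀ hl hr, one_mul]

theorem cylinderEigenvalue_nonpos_iff {r l : ℝ} {k m : ℕ} (hr : 0 < r) (hl : 0 < l) (hm : 1 ≤ m) :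
    cylinderEigenvalue r l k m ≤ 0 ↔ k = 0 ∧ m * Real.pi * r ≤ l := by
  rcases Nat.eq_zero_or_pos k with rfl | hk
  · simpa using cylinderEigenvalue_zero_left_nonpos_iff hr hl m
  · simp [hk.ne', (cylinderEigenvalue_pos r hl.ne' hk hm).not_ge]

/-- Plateau–Rayleigh criterion: With
`μ_{k,m} = (k² − 1)/r² + m²π²/l²`, some admissible mode (`k ≥ 0`, `m ≥ 1`,
`(k, m) ≠ (0, 1)`) has `μ_{k,m} ≤ 0` iff `l ≥ 2πr`. -/
theorem stmt5 (r l : ℝ) (hr : 0 < r) (hl : 0 < l) :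
    (∃ k m : ℕ, 1 ≤ m ∧ (k, m) ≠ (0, 1) ∧
        ((k : ℝ) ^ 2 - 1) / r ^ 2 + (m : ℝ) ^ 2 * Real.pi ^ 2 / l ^ 2 ≤ 0)
      ↔ 2 * Real.pi * r ≤ l := by
  constructor
  · rintro ⟨k, m, hm, admissible, eigenvalue_nonpos⟩
    obtain ⟨rfl, hml⟩ := (cylinderEigenvalue_nonpos_iff hr hl hm).mp eigenvalue_nonpos
    have m_ne_one : m ≠ 1 := fun h => admissible (by rw [h])
    have two_le_m : (2 : ℝ) ≤ m := Nat.ofNat_le_cast.mpr (by lia)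
    calc 2 * Real.pi * r ≤ m * Real.pi * r := by gcongr
      _ ≤ l := hml
  · intro hrl
    exact ⟨0, 2, one_le_two, by simp,
      (cylinderEigenvalue_zero_left_nonpos_iff hr hl 2).mpr (by exact_mod_cast hrl)⟩
end

section
/- Let r > 0, l > 0 and A be real numbers with −1/(3r²) ≤ A < 1/r², and define μ_{k,m} = A + (k² − 1)/r² + m²π²/l² for integers k ≥ 0, m ≥ 1. Then there exists an admissible mode (k, m) (i.e. k ≥ 0, m ≥ 1, (k, m) ≠ (0, 1)) with μ_{k,m} ≤ 0 if and only if l ≥ l_{0,2} = 2π/√(1/r² − A); moreover, when l = l_{0,2} the only admissible mode with nonpositive eigenvalue possible among (0,2) and (1,1) that vanishes is the axially symmetric mode (0, 2) (i.e. μ_{0,2} = 0 and μ_{1,1} ≥ 0 at l = l_{0,2}). Thus for medium-thickness films the instability that sets in first is axially symmetric. -/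
/-!
Eigenvalues increase with both mode numbers, so every admissible eigenvalue is at least `μ_{0,2}` or
at least `μ_{1,1}`. Since `4 μ_{1,1} - μ_{0,2} = 3A + 1/r²` does not depend on `l`, the condition
`-1/(3r²) ≤ A` says precisely that `μ_{0,2} ≤ 4 μ_{1,1}`: the mode `(1,1)` can only become unstable
once `(0,2)` is.
-/

namespace CylindricalFilm

open Real

/-- The eigenvalue `μ_{k,m}` of the second variation operator of a cylindrical film of radius `r`
and length `l`, where `A` is the radial derivative of the potential at the film surface. -/
noncomputable def stabilityEigenvalue (A r l : ℝ) (k m : ℕ) : ℝ :=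
  A + ((k : ℝ) ^ 2 - 1) / r ^ 2 + (m : ℝ) ^ 2 * π ^ 2 / l ^ 2

/-- The critical length `l_{k,m}`, at which the eigenvalue `μ_{k,m}` vanishes. It is meaningful only
for `A < (1 - k²) / r²`; otherwise the square root, and with it the quotient, is `0`. -/
noncomputable def criticalLength (A r : ℝ) (k m : ℕ) : ℝ :=
  m * π / √((1 - (k : ℝ) ^ 2) / r ^ 2 - A)

/-- The volume-preserving modes: all `(k, m)` with `m ≥ 1` except `(0, 1)`. -/
def IsAdmissible (k m : ℕ) : Prop :=
  1 ≤ m ∧ (k, m) ≠ (0, 1)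

theorem isAdmissible_iff {k m : ℕ} : IsAdmissible k m ↔ 2 ≤ m ∨ 1 ≤ k ∧ 1 ≤ m := by
  simp only [IsAdmissible, ne_eq, Prod.mk.injEq]
  omega

variable {A r l : ℝ} {k m : ℕ}

theorem criticalLength_zero_two (A r : ℝ) :
    criticalLength A r 0 2 = 2 * π / √(1 / r ^ 2 - A) := by
  simp [criticalLength]

theorem stabilityEigenvalue_zero_two (A r l : ℝ) :
    stabilityEigenvalue A r l 0 2 = A - 1 / r ^ 2 + 4 * π ^ 2 / l ^ 2 := by
  simp only [stabilityEigenvalue]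
  push_cast
  ring

theorem stabilityEigenvalue_one_one (A r l : ℝ) :
    stabilityEigenvalue A r l 1 1 = A + π ^ 2 / l ^ 2 := by
  simp [stabilityEigenvalue]

theorem stabilityEigenvalue_eq_sq_sub (A r l : ℝ) (k m : ℕ) :
    stabilityEigenvalue A r l k m = (m * π / l) ^ 2 - ((1 - (k : ℝ) ^ 2) / r ^ 2 - A) := by
  simp only [stabilityEigenvalue]
  ring

theorem stabilityEigenvalue_mono (A r l : ℝ) {k k' m m' : ℕ} (hk : k ≤ k') (hm : m ≤ m') :
    stabilityEigenvalue A r l k m ≤ stabilityEigenvalue A r l k' m' := by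
  simp only [stabilityEigenvalue]
  gcongr

theorem stabilityEigenvalue_nonpos_iff (hl : 0 < l) (hA : A < (1 - (k : ℝ) ^ 2) / r ^ 2) :
    stabilityEigenvalue A r l k m ≤ 0 ↔ criticalLength A r k m ≤ l := by
  have hgap : 0 < (1 - (k : ℝ) ^ 2) / r ^ 2 - A := sub_pos.mpr hA
  rw [stabilityEigenvalue_eq_sq_sub, sub_nonpos, ← le_sqrt (by positivity) hgap.le, criticalLength,
    div_le_comm₀ hl (sqrt_pos.mpr hgap)]

theorem stabilityEigenvalue_criticalLength (hm : m ≠ 0) (hA : A < (1 - (k : ℝ) ^ 2) / r ^ 2) :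
    stabilityEigenvalue A r (criticalLength A r k m) k m = 0 := by
  have hmπ : (m : ℝ) * π ≠ 0 := by positivity
  rw [stabilityEigenvalue_eq_sq_sub, criticalLength, div_div_cancel₀ hmπ,
    sq_sqrt (sub_pos.mpr hA).le, sub_self]

theorem stabilityEigenvalue_zero_two_le_four_mul_one_one (l : ℝ)
    (hA : -(1 / (3 * r ^ 2)) ≤ A) :
    stabilityEigenvalue A r l 0 2 ≤ 4 * stabilityEigenvalue A r l 1 1 := by
  have hdiff : 4 * stabilityEigenvalue A r l 1 1 - stabilityEigenvalue A r l 0 2 =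
      3 * (A + 1 / (3 * r ^ 2)) := by
    rw [stabilityEigenvalue_one_one, stabilityEigenvalue_zero_two]
    ring
  linarith

theorem exists_isAdmissible_stabilityEigenvalue_nonpos_iff (l : ℝ)
    (hA : -(1 / (3 * r ^ 2)) ≤ A) :
    (∃ k m, IsAdmissible k m ∧ stabilityEigenvalue A r l k m ≤ 0) ↔
      stabilityEigenvalue A r l 0 2 ≤ 0 := by
  refine ⟨?_, fun h ↦ ⟨0, 2, isAdmissible_iff.mpr (.inl le_rfl), h⟩⟩
  rintro ⟨k, m, hadm, hμ⟩
  rcases isAdmissible_iff.mp hadm with hm | ⟨hk, hm⟩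
  · exact (stabilityEigenvalue_mono A r l k.zero_le hm).trans hμ
  · have h11 : stabilityEigenvalue A r l 1 1 ≤ 0 := (stabilityEigenvalue_mono A r l hk hm).trans hμ
    linarith [stabilityEigenvalue_zero_two_le_four_mul_one_one l hA]

end CylindricalFilm

open CylindricalFilm in
/-- medium films: If `−1/(3r²) ≤ A < 1/r²` then some admissible mode
(`k ≥ 0`, `m ≥ 1`, `(k, m) ≠ (0, 1)`) has `μ_{k,m} ≤ 0` iff `l ≥ l_{0,2}`;
moreover at `l = l_{0,2}` one has `μ_{0,2} = 0` and `μ_{1,1} ≥ 0`, so the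
instability that sets in first is axially symmetric. -/
theorem stmt10 (r l A : ℝ) (hr : 0 < r) (hl : 0 < l)
    (hA1 : -(1 / (3 * r ^ 2)) ≤ A) (hA2 : A < 1 / r ^ 2)
    (l02 : ℝ) (hl02 : l02 = 2 * Real.pi / Real.sqrt (1 / r ^ 2 - A)) :
    ((∃ k m : ℕ, 1 ≤ m ∧ (k, m) ≠ (0, 1) ∧
        A + ((k : ℝ) ^ 2 - 1) / r ^ 2 + (m : ℝ) ^ 2 * Real.pi ^ 2 / l ^ 2 ≤ 0)
      ↔ l02 ≤ l) ∧
    (A - 1 / r ^ 2 + 4 * Real.pi ^ 2 / l02 ^ 2 = 0 ∧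
      0 ≤ A + Real.pi ^ 2 / l02 ^ 2) := by
  rw [← criticalLength_zero_two] at hl02
  have hA : A < (1 - ((0 : ℕ) : ℝ) ^ 2) / r ^ 2 := by simpa using hA2
  have h02 : stabilityEigenvalue A r l02 0 2 = 0 :=
    hl02 ▸ stabilityEigenvalue_criticalLength two_ne_zero hA
  refine ⟨?_, ?_, ?_⟩
  · rw [hl02, ← stabilityEigenvalue_nonpos_iff hl hA,
      ← exists_isAdmissible_stabilityEigenvalue_nonpos_iff l hA1]
    simp only [IsAdmissible, stabilityEigenvalue, and_assoc]
  · rw [← stabilityEigenvalue_zero_two, h02]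
  · rw [← stabilityEigenvalue_one_one A r]
    linarith [stabilityEigenvalue_zero_two_le_four_mul_one_one l02 hA1]
end

section
/- Let r > 0, l > 0 and A be real numbers with A ≤ −1/(3r²), and define μ_{k,m} = A + (k² − 1)/r² + m²π²/l² for integers k ≥ 0, m ≥ 1. Then there exists an admissible mode (k, m) (i.e. k ≥ 0, m ≥ 1, (k, m) ≠ (0, 1)) with μ_{k,m} ≤ 0 if and only if l ≥ l_{1,1} = π/√(−A). Thus for thick films the instability sets in at length l_{1,1} via the non-axisymmetric mode (1, 1). -/
/-!
The eigenvalue `μ_{k,m}` increases with `k` and with `m`, and the minimal admissible modes are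
`(1, 1)` and `(0, 2)`, so these two modes decide stability for every `A`. Since
`μ_{0,2} - 4 μ_{1,1} = -3 A - 1 / r²`, which is nonnegative exactly for thick films, the mode
`(0, 2)` of a thick film can only be unstable when `(1, 1)` already is.
-/

/-- The eigenvalue `μ_{k,m}` of the second variation of a cylindrical film of radius `r` and
length `l`, where `A` is the radial derivative of the potential at the film surface. -/
noncomputable def filmEigenvalue (r l A : ℝ) (k m : ℕ) : ℝ :=
  A + ((k : ℝ) ^ 2 - 1) / r ^ 2 + (m : ℝ) ^ 2 * Real.pi ^ 2 / l ^ 2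

section

variable {r l A : ℝ} {k k' m m' : ℕ}

theorem filmEigenvalue_mono (hk : k ≤ k') (hm : m ≤ m') :
    filmEigenvalue r l A k m ≤ filmEigenvalue r l A k' m' := by
  unfold filmEigenvalue
  gcongr

theorem filmEigenvalue_one_one : filmEigenvalue r l A 1 1 = A + (Real.pi / l) ^ 2 := by
  simp [filmEigenvalue, div_pow]

theorem filmEigenvalue_zero_two :
    filmEigenvalue r l A 0 2 = 4 * filmEigenvalue r l A 1 1 + (-3 * A - 1 / r ^ 2) := by
  rw [filmEigenvalue_one_one, filmEigenvalue]
  push_cast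
  ring

theorem filmEigenvalue_one_one_nonpos_iff (hl : 0 < l) (hA : A < 0) :
    filmEigenvalue r l A 1 1 ≤ 0 ↔ Real.pi / √(-A) ≤ l := by
  have hsqrt : 0 < √(-A) := Real.sqrt_pos.mpr (neg_pos.mpr hA)
  calc filmEigenvalue r l A 1 1 ≤ 0
      ↔ (Real.pi / l) ^ 2 ≤ -A := by rw [filmEigenvalue_one_one, le_neg_iff_add_nonpos_left]
    _ ↔ Real.pi / l ≤ √(-A) := (Real.le_sqrt' (div_pos Real.pi_pos hl)).symm
    _ ↔ Real.pi / √(-A) ≤ l := div_le_comm₀ hl hsqrt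

theorem filmEigenvalue_one_one_nonpos_of_zero_two (hA : A ≤ -(1 / (3 * r ^ 2)))
    (h : filmEigenvalue r l A 0 2 ≤ 0) : filmEigenvalue r l A 1 1 ≤ 0 := by
  have hthick : 0 ≤ -3 * A - 1 / r ^ 2 := by
    have hthird : 1 / (3 * r ^ 2) = 1 / r ^ 2 / 3 := by ring
    linarith
  linarith [filmEigenvalue_zero_two (r := r) (l := l) (A := A)]

theorem one_le_or_two_le_of_admissible (hm : 1 ≤ m) (hne : (k, m) ≠ (0, 1)) :
    1 ≤ k ∨ 2 ≤ m := by
  rw [Ne, Prod.mk.injEq] at hne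
  omega

theorem exists_admissible_filmEigenvalue_nonpos_iff :
    (∃ k m : ℕ, 1 ≤ m ∧ (k, m) ≠ (0, 1) ∧ filmEigenvalue r l A k m ≤ 0) ↔
      filmEigenvalue r l A 1 1 ≤ 0 ∨ filmEigenvalue r l A 0 2 ≤ 0 := by
  constructor
  · rintro ⟨k, m, hm, hne, hμ⟩
    exact (one_le_or_two_le_of_admissible hm hne).imp
      (fun hk ↦ (filmEigenvalue_mono hk hm).trans hμ)
      (fun hm₂ ↦ (filmEigenvalue_mono k.zero_le hm₂).trans hμ)
  · rintro (hμ | hμ)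
    · exact ⟨1, 1, le_rfl, by decide, hμ⟩
    · exact ⟨0, 2, one_le_two, by decide, hμ⟩

end

/-- thick films: If `A ≤ −1/(3r²)` then some admissible mode
(`k ≥ 0`, `m ≥ 1`, `(k, m) ≠ (0, 1)`) has `μ_{k,m} ≤ 0` iff
`l ≥ l_{1,1} = π/√(−A)`: the instability sets in via the non-axisymmetric
mode `(1, 1)`. -/
theorem stmt11 (r l A : ℝ) (hr : 0 < r) (hl : 0 < l)
    (hA : A ≤ -(1 / (3 * r ^ 2))) :
    (∃ k m : ℕ, 1 ≤ m ∧ (k, m) ≠ (0, 1) ∧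
        A + ((k : ℝ) ^ 2 - 1) / r ^ 2 + (m : ℝ) ^ 2 * Real.pi ^ 2 / l ^ 2 ≤ 0)
      ↔ Real.pi / Real.sqrt (-A) ≤ l := by
  have hA_neg : A < 0 := hA.trans_lt (neg_neg_of_pos (by positivity))
  calc (∃ k m : ℕ, 1 ≤ m ∧ (k, m) ≠ (0, 1) ∧ filmEigenvalue r l A k m ≤ 0)
      ↔ filmEigenvalue r l A 1 1 ≤ 0 ∨ filmEigenvalue r l A 0 2 ≤ 0 :=
        exists_admissible_filmEigenvalue_nonpos_iff
    _ ↔ filmEigenvalue r l A 1 1 ≤ 0 :=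
        or_iff_left_of_imp (filmEigenvalue_one_one_nonpos_of_zero_two hA)
    _ ↔ Real.pi / √(-A) ≤ l := filmEigenvalue_one_one_nonpos_iff hl hA_neg
end

section
/- Let α > 0 and r₀ > 0 be real numbers, and define r_c = r₀ + √(3α)/2 + (1/2)·√(4r₀√(3α) + 3α). Then r_c > r₀ and r_c satisfies the equation 3α/(r_c − r₀)⁴ = 1/r_c². -/
/-!
With `s = √(3α)`, the equation `s² / (r - r₀)⁴ = 1 / r²` is the square of
`s / (r - r₀)² = 1 / r`, that is, of the quadratic equation `(r - r₀)² = s * r`. In the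
unknown `r - r₀` its discriminant is `4 * r₀ * s + s²`, and `rc` is its larger root.
-/

theorem sq_div_pow_four_eq_one_div_sq {G₀ : Type*} [CommGroupWithZero G₀] {s x r : G₀}
    (hs : s ≠ 0) (h : x ^ 2 = s * r) : s ^ 2 / x ^ 4 = 1 / r ^ 2 := by
  have hx : x ^ 4 = s ^ 2 * r ^ 2 := by rw [← mul_pow, ← h, ← pow_mul]
  rw [hx, div_mul_cancel_left₀ (pow_ne_zero 2 hs), one_div]

theorem sub_sq_eq_mul_iff {K : Type*} [Field K] [NeZero (2 : K)] {r r₀ s t : K}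
    (ht : t ^ 2 = 4 * r₀ * s + s ^ 2) :
    (r - r₀) ^ 2 = s * r ↔ r = r₀ + s / 2 + t / 2 ∨ r = r₀ + s / 2 - t / 2 := by
  have hdiscrim : discrim 1 (-s) (-(s * r₀)) = t * t := by
    rw [discrim]
    linear_combination -ht
  calc (r - r₀) ^ 2 = s * r
      ↔ 1 * ((r - r₀) * (r - r₀)) + -s * (r - r₀) + -(s * r₀) = 0 := by
        rw [← sub_eq_zero]
        ring_nf
    _ ↔ r - r₀ = (- -s + t) / (2 * 1) ∨ r - r₀ = (- -s - t) / (2 * 1) :=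
        quadratic_eq_zero_iff one_ne_zero hdiscrim (r - r₀)
    _ ↔ r = r₀ + s / 2 + t / 2 ∨ r = r₀ + s / 2 - t / 2 := by
        rw [sub_eq_iff_eq_add', sub_eq_iff_eq_add']
        ring_nf

/-- For `α > 0`, `r₀ > 0`, the radius
`r_c = r₀ + √(3α)/2 + (1/2)·√(4r₀√(3α) + 3α)` satisfies `r_c > r₀` and
`3α/(r_c − r₀)⁴ = 1/r_c²`. -/
theorem stmt12 (α r₀ : ℝ) (hα : 0 < α) (hr₀ : 0 < r₀) (rc : ℝ)
    (hrc : rc = r₀ + Real.sqrt (3 * α) / 2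
        + (1 / 2) * Real.sqrt (4 * r₀ * Real.sqrt (3 * α) + 3 * α)) :
    r₀ < rc ∧ 3 * α / (rc - r₀) ^ 4 = 1 / rc ^ 2 := by
  set s := √(3 * α)
  set t := √(4 * r₀ * s + 3 * α)
  have hs : 0 < s := Real.sqrt_pos.mpr (by positivity)
  have hs_sq : s ^ 2 = 3 * α := Real.sq_sqrt (by positivity)
  have ht : 0 ≤ t := Real.sqrt_nonneg _
  have ht_sq : t ^ 2 = 4 * r₀ * s + s ^ 2 := by
    rw [hs_sq]
    exact Real.sq_sqrt (by positivity)
  have hquad : (rc - r₀) ^ 2 = s * rc :=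
    (sub_sq_eq_mul_iff ht_sq).mpr (.inl (by rw [hrc]; ring))
  refine ⟨by linarith, ?_⟩
  rw [← hs_sq]
  exact sq_div_pow_four_eq_one_div_sq hs.ne' hquad
end

section
/- Let α > 0 and r₀ > 0 be real numbers. The equation 3α/(r − r₀)⁴ = 1/r² has exactly one solution r in the interval (r₀, ∞), namely r = r₀ + √(3α)/2 + (1/2)·√(4r₀√(3α) + 3α). -/
/-!
Taking square roots turns the equation into `(r - r₀) ^ 2 = √(3α) * r`. In terms of the film
thickness `x = r - r₀` this is `x ^ 2 = √(3α) * x + √(3α) * r₀`, a quadratic whose roots have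
negative product, so exactly one of them is positive.
-/

theorem abs_lt_sqrt_sq_add {b c : ℝ} (hc : 0 < c) : |b| < √(b ^ 2 + c) :=
  Real.lt_sqrt_of_sq_lt (by rw [sq_abs]; exact lt_add_of_pos_right _ hc)

theorem sq_eq_mul_add_iff {b c : ℝ} (h : 0 ≤ b ^ 2 + 4 * c) (x : ℝ) :
    x ^ 2 = b * x + c ↔
      x = (b + √(b ^ 2 + 4 * c)) / 2 ∨ x = (b - √(b ^ 2 + 4 * c)) / 2 := by
  have discrim_eq : discrim 1 (-b) (-c) = √(b ^ 2 + 4 * c) * √(b ^ 2 + 4 * c) := by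
    rw [Real.mul_self_sqrt h, discrim]
    ring
  have roots := quadratic_eq_zero_iff one_ne_zero discrim_eq x
  rw [neg_neg, mul_one] at roots
  rw [← roots, ← sub_eq_zero]
  ring_nf

theorem pos_and_sq_eq_mul_add_iff {b c : ℝ} (hc : 0 < c) (x : ℝ) :
    0 < x ∧ x ^ 2 = b * x + c ↔ x = (b + √(b ^ 2 + 4 * c)) / 2 := by
  obtain ⟨neg_sqrt_lt, lt_sqrt⟩ :=
    abs_lt.mp (abs_lt_sqrt_sq_add (b := b) (mul_pos four_pos hc))
  rw [sq_eq_mul_add_iff (by positivity)]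
  constructor
  · rintro ⟨x_pos, larger | smaller⟩
    · exact larger
    · linarith
  · intro larger
    exact ⟨by linarith, Or.inl larger⟩

theorem div_pow_four_eq_one_div_sq_iff {c d r : ℝ} (hc : 0 ≤ c) (hd : d ≠ 0) (hr : 0 < r) :
    c / d ^ 4 = 1 / r ^ 2 ↔ d ^ 2 = √c * r := by
  calc c / d ^ 4 = 1 / r ^ 2
    _ ↔ c * r ^ 2 = 1 * d ^ 4 := div_eq_div_iff (by positivity) (by positivity)
    _ ↔ (d ^ 2) ^ 2 = (√c * r) ^ 2 := by
      rw [mul_pow, Real.sq_sqrt hc, ← pow_mul, one_mul, eq_comm]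
    _ ↔ d ^ 2 = √c * r := sq_eq_sq₀ (by positivity) (by positivity)

/-- For `α > 0`, `r₀ > 0`, the equation `3α/(r − r₀)⁴ = 1/r²` has
exactly one solution `r ∈ (r₀, ∞)`, namely
`r = r₀ + √(3α)/2 + (1/2)·√(4r₀√(3α) + 3α)`. -/
theorem stmt13 (α r₀ : ℝ) (hα : 0 < α) (hr₀ : 0 < r₀) :
    ∀ r : ℝ, (r₀ < r ∧ 3 * α / (r - r₀) ^ 4 = 1 / r ^ 2)
      ↔ r = r₀ + Real.sqrt (3 * α) / 2
          + (1 / 2) * Real.sqrt (4 * r₀ * Real.sqrt (3 * α) + 3 * α) := by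
  intro r
  have discrim_eq : √(3 * α) ^ 2 + 4 * (√(3 * α) * r₀) = 4 * r₀ * √(3 * α) + 3 * α := by
    rw [Real.sq_sqrt (by positivity)]
    ring
  calc r₀ < r ∧ 3 * α / (r - r₀) ^ 4 = 1 / r ^ 2
    _ ↔ r₀ < r ∧ (r - r₀) ^ 2 = √(3 * α) * r :=
      and_congr_right fun hr ↦ div_pow_four_eq_one_div_sq_iff (by positivity)
        (sub_pos.mpr hr).ne' (hr₀.trans hr)
    _ ↔ 0 < r - r₀ ∧ (r - r₀) ^ 2 = √(3 * α) * (r - r₀) + √(3 * α) * r₀ := by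
      rw [sub_pos, ← mul_add, sub_add_cancel]
    _ ↔ r - r₀ = (√(3 * α) + √(4 * r₀ * √(3 * α) + 3 * α)) / 2 := by
      rw [pos_and_sq_eq_mul_add_iff (by positivity), discrim_eq]
    _ ↔ r = r₀ + √(3 * α) / 2 + (1 / 2) * √(4 * r₀ * √(3 * α) + 3 * α) := by
      rw [sub_eq_iff_eq_add']
      ring_nf
end
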